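/- Let S > 1 and β₁, β₂ ∈ [0,1) with β₁ + β₂ < 1. Set g_i(t) = |t|^{−β_i} (1 + |t|)^{β_i − S}. Then sup_{ν ≥ 0} ν ∫_{ℝ²} (1 + ν|{w₁ + w₂}|)^{−2} g₁(w₁) g₂(w₂) dw₁ dw₂ < ∞, where {x} ∈ (−π, π] is the 2π-fractional part of x. -/

import Mathlib

open MeasureTheory ENNReal

lemma kfin (S : ℝ) (hS : 1 < S) : ∫⁻ t : ℝ, ENNReal.ofReal ((1 + |t|) ^ (-S)) < ⊤ := by
  have := finite_integral_one_add_norm (E := ℝ) (μ := volume) (r := S) (by simpa using hS)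
  simpa using this

lemma psi_le (ν : ℝ) (hν : 0 < ν) :
    ENNReal.ofReal ν * ∫⁻ t : ℝ, ENNReal.ofReal ((1 + ν * |t|) ^ (-(2:ℝ)))
      = ∫⁻ t : ℝ, ENNReal.ofReal ((1 + |t|) ^ (-(2:ℝ))) := by
  conv_rhs => rw [← Real.smul_map_volume_mul_left (a := ν) hν.ne']
  rw [lintegral_smul_measure, lintegral_map (by fun_prop) (by fun_prop)]
  simp [abs_mul, abs_of_pos hν]

lemma hfin (S β : ℝ) (hS : 1 < S) (h0 : 0 ≤ β) (h1 : β < 1) :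
    ∫⁻ t : ℝ, ENNReal.ofReal (|t| ^ (-β) * (1 + |t|) ^ (β - S)) < ⊤ := by
  have key : ∫⁻ t : ℝ, ENNReal.ofReal ((Set.Ioc (0:ℝ) 1).indicator (fun x => x ^ (-β)) ‖t‖) < ⊤ := by
    have : Integrable (fun t : ℝ => (Set.Ioc (0:ℝ) 1).indicator (fun x => x ^ (-β)) ‖t‖) volume := by
      rw [integrable_fun_norm_addHaar]
      simp only [Module.finrank_self, Nat.sub_self, pow_zero, one_smul]
      apply Integrable.integrableOn
      rw [integrable_indicator_iff measurableSet_Ioc]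
      rw [← intervalIntegrable_iff_integrableOn_Ioc_of_le (by norm_num)]
      exact intervalIntegral.intervalIntegrable_rpow' (by linarith)
    exact this.lintegral_lt_top
  have k := kfin S hS
  calc _ ≤ ∫⁻ t : ℝ, (ENNReal.ofReal ((Set.Ioc (0:ℝ) 1).indicator (fun x => x ^ (-β)) ‖t‖) + ENNReal.ofReal 2 * ENNReal.ofReal ((1 + |t|) ^ (-S))) := by
        apply lintegral_mono
        intro t
        simp only
        have hk : 0 ≤ (1 + |t|) ^ (-S) := by positivity
        rw [← ENNReal.ofReal_mul (by norm_num), ← ENNReal.ofReal_add _ (by positivity)]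
        swap
        · exact Set.indicator_nonneg (fun x hx => Real.rpow_nonneg hx.1.le _) _
        apply ENNReal.ofReal_le_ofReal
        by_cases h : ‖t‖ ∈ Set.Ioc (0:ℝ) 1
        · rw [Set.indicator_of_mem h]
          have : (1 + |t|) ^ (β - S) ≤ 1 := Real.rpow_le_one_of_one_le_of_nonpos (by simp) (by linarith)
          have h3 : 0 ≤ |t| ^ (-β) := by positivity
          rw [Real.norm_eq_abs]
          nlinarith
        · rw [Set.indicator_of_notMem h, zero_add]
          have h2 : (1 + |t|) ^ (β - S) = (1 + |t|) ^ β * (1 + |t|) ^ (-S) := by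
            rw [← Real.rpow_add (by positivity)]; ring_nf
          rw [h2, ← mul_assoc]
          apply mul_le_mul_of_nonneg_right _ hk
          rcases eq_or_ne t 0 with rfl | ht
          · simp
            linarith [Real.zero_rpow_le_one (-β)]
          · have htp : 0 < |t| := abs_pos.2 ht
            have : 1 < |t| := by
              by_contra hc
              exact h ⟨htp, not_lt.1 hc⟩
            calc |t| ^ (-β) * (1 + |t|) ^ β ≤ |t| ^ (-β) * (2 * |t|) ^ β := by gcongr; linarith
              _ = 2 ^ β := by
                rw [Real.mul_rpow (by norm_num) htp.le, Real.rpow_neg htp.le]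
                have := (Real.rpow_pos_of_pos htp β).ne'
                field_simp
              _ ≤ 2 ^ (1:ℝ) := Real.rpow_le_rpow_of_exponent_le (by norm_num) h1.le
              _ = 2 := by simp
    _ < ⊤ := by
        rw [lintegral_add_right _ (by fun_prop), lintegral_const_mul _ (by fun_prop)]
        exact ENNReal.add_lt_top.2 ⟨key, ENNReal.mul_lt_top ENNReal.ofReal_lt_top k⟩

lemma ksum (S : ℝ) (hS : 1 < S) : ∑' n : ℤ, ENNReal.ofReal ((1 + |(n:ℝ)|) ^ (-S)) < ⊤ := by
  have h := Real.summable_abs_int_rpow hS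
  have h2 : Summable (fun n : ℤ => (1 + |(n:ℝ)|) ^ (-S)) := by
    have h3 : Summable (fun n : ℤ => |(n:ℝ)| ^ (-S) + if n = 0 then 1 else 0) :=
      h.add (summable_of_ne_finset_zero (s := {0}) (by simp +contextual))
    refine Summable.of_nonneg_of_le (fun n => by positivity) (fun n => ?_) h3
    by_cases hn : n = 0
    · subst hn; simp; positivity
    · simp only [hn, if_false, add_zero]
      have : 0 < |(n:ℝ)| := by positivity
      exact Real.rpow_le_rpow_of_nonpos this (by linarith) (by linarith)
  exact (h2.tsum_ofReal_lt_top)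

lemma kper (frac : ℝ → ℝ)
    (hfrac : ∀ x : ℝ, frac x ∈ Set.Ioc (-Real.pi) Real.pi ∧
      ∃ k : ℤ, x - frac x = 2 * Real.pi * k) (S : ℝ) (hS : 1 < S) (y : ℝ) :
    ∑' n : ℤ, ENNReal.ofReal ((1 + |y + 2 * Real.pi * n|) ^ (-S)) ≤
      ENNReal.ofReal ((1 + Real.pi) ^ S) * ∑' n : ℤ, ENNReal.ofReal ((1 + |(n:ℝ)|) ^ (-S)) := by
  obtain ⟨hr, m, hm⟩ := hfrac y
  set r := frac y
  rw [← (Equiv.addRight m).tsum_eq (fun n : ℤ => ENNReal.ofReal ((1 + |(n:ℝ)|) ^ (-S))),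
    ← ENNReal.tsum_mul_left]
  refine ENNReal.tsum_le_tsum fun n => ?_
  have hp := Real.pi_gt_three
  rw [← ENNReal.ofReal_mul (by positivity)]
  apply ENNReal.ofReal_le_ofReal
  simp only [Equiv.coe_addRight]
  set j : ℝ := ((n + m : ℤ) : ℝ) with hj
  have hy : y + 2 * Real.pi * n = r + 2 * Real.pi * j := by
    rw [hj]; push_cast; linarith
  rw [hy]
  have hra : |r| ≤ Real.pi := abs_le.2 ⟨hr.1.le, hr.2⟩
  have h1 : 2 * Real.pi * |j| ≤ Real.pi + |r + 2 * Real.pi * j| := by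
    have : |2 * Real.pi * j| = 2 * Real.pi * |j| := by
      rw [abs_mul, abs_of_pos (by positivity)]
    rw [← this]
    calc |2 * Real.pi * j| = |(r + 2 * Real.pi * j) - r| := by ring_nf
      _ ≤ _ := (abs_sub _ _).trans (by linarith)
  have h2 : (1 + |j|) ≤ (1 + Real.pi) * (1 + |r + 2 * Real.pi * j|) := by
    nlinarith [abs_nonneg j, abs_nonneg (r + 2 * Real.pi * j)]
  have h3 := Real.rpow_le_rpow_of_nonpos (z := -S) (by positivity) h2 (by linarith)
  rw [Real.mul_rpow (by positivity) (by positivity)] at h3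
  calc _ = (1 + Real.pi) ^ S * ((1 + Real.pi) ^ (-S) * (1 + |r + 2 * Real.pi * j|) ^ (-S)) := by
        rw [← mul_assoc, ← Real.rpow_add (by positivity)]; simp
    _ ≤ _ := by gcongr

/-- The asymmetric estimate. -/
lemma asym (frac : ℝ → ℝ)
    (hfrac : ∀ x : ℝ, frac x ∈ Set.Ioc (-Real.pi) Real.pi ∧
      ∃ k : ℤ, x - frac x = 2 * Real.pi * k) (S : ℝ) (hS : 1 < S)
    (ν : ℝ) (hν : 0 < ν) (h : ℝ → ℝ≥0∞) (hh : Measurable h) :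
    ENNReal.ofReal ν * ∫⁻ w : ℝ × ℝ, (∑' n : ℤ, ENNReal.ofReal
        ((1 + ν * |w.1 + w.2 + 2 * Real.pi * n|) ^ (-(2:ℝ)))) *
          (h w.1 * ENNReal.ofReal ((1 + |w.2|) ^ (-S))) ≤
      (∫⁻ t : ℝ, ENNReal.ofReal ((1 + |t|) ^ (-(2:ℝ)))) *
      (ENNReal.ofReal ((1 + Real.pi) ^ S) * ∑' n : ℤ, ENNReal.ofReal ((1 + |(n:ℝ)|) ^ (-S))) *
      ∫⁻ t, h t := by
  set C := (ENNReal.ofReal ((1 + Real.pi) ^ S) * ∑' n : ℤ, ENNReal.ofReal ((1 + |(n:ℝ)|) ^ (-S)))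
  rw [← psi_le ν hν]
  set P := ∫⁻ t : ℝ, ENNReal.ofReal ((1 + ν * |t|) ^ (-(2:ℝ))) with hP
  rw [mul_assoc, mul_assoc]
  gcongr
  rw [Measure.volume_eq_prod, lintegral_prod _ (by fun_prop)]
  rw [← mul_assoc, ← lintegral_const_mul _ hh]
  apply lintegral_mono
  intro a
  simp only
  calc _ = ∫⁻ b : ℝ, h a * ((∑' n : ℤ, ENNReal.ofReal
        ((1 + ν * |a + b + 2 * Real.pi * n|) ^ (-(2:ℝ))) *
          ENNReal.ofReal ((1 + |b|) ^ (-S)))) := by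
        congr 1; ext b; rw [ENNReal.tsum_mul_right]; ring
    _ = h a * ∑' n : ℤ, ∫⁻ b : ℝ, ENNReal.ofReal
        ((1 + ν * |a + b + 2 * Real.pi * n|) ^ (-(2:ℝ))) *
          ENNReal.ofReal ((1 + |b|) ^ (-S)) := by
        rw [lintegral_const_mul _ (by fun_prop), lintegral_tsum (fun n => by fun_prop)]
    _ = h a * ∑' n : ℤ, ∫⁻ x : ℝ, ENNReal.ofReal
        ((1 + ν * |x|) ^ (-(2:ℝ))) *
          ENNReal.ofReal ((1 + |(a - x) + 2 * Real.pi * n|) ^ (-S)) := by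
        congr 2; ext n
        rw [← lintegral_add_right_eq_self (μ := volume) (fun x : ℝ => ENNReal.ofReal
        ((1 + ν * |x|) ^ (-(2:ℝ))) *
          ENNReal.ofReal ((1 + |(a - x) + 2 * Real.pi * n|) ^ (-S))) (a + 2 * Real.pi * n)]
        congr 1; ext b
        congr 3
        · ring_nf
        · rw [← abs_neg b]; ring_nf
    _ = h a * ∫⁻ x : ℝ, ENNReal.ofReal
        ((1 + ν * |x|) ^ (-(2:ℝ))) *
          ∑' n : ℤ, ENNReal.ofReal ((1 + |(a - x) + 2 * Real.pi * n|) ^ (-S)) := by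
        rw [← lintegral_tsum (fun n => by fun_prop)]
        congr 2; ext x; rw [ENNReal.tsum_mul_left]
    _ ≤ h a * ∫⁻ x : ℝ, ENNReal.ofReal ((1 + ν * |x|) ^ (-(2:ℝ))) * C := by
        gcongr with x
        exact kper frac hfrac S hS _
    _ = _ := by
        rw [lintegral_mul_const _ (by fun_prop)]; ring

lemma ptw_aux (S β γ : ℝ) (hβ : 0 ≤ β) (hγ : 0 ≤ γ) (a b : ℝ) (ha : 0 < a) (hab : a ≤ b) :
    (a ^ (-β) * (1 + a) ^ (β - S)) * (b ^ (-γ) * (1 + b) ^ (γ - S)) ≤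
    (a ^ (-(β + γ)) * (1 + a) ^ (β + γ - S)) * (1 + b) ^ (-S) := by
  have hb : 0 < b := ha.trans_le hab
  have key : ∀ t δ : ℝ, 0 < t → t ^ (-δ) * (1 + t) ^ (δ - S) = ((1 + t) / t) ^ δ * (1 + t) ^ (-S) := by
    intro t δ ht
    rw [Real.div_rpow (by positivity) ht.le, Real.rpow_neg ht.le, sub_eq_add_neg,
      Real.rpow_add (by positivity)]
    ring
  rw [key a _ ha, key b _ hb, key a _ ha, Real.rpow_add (by positivity)]
  have h1 : ((1 + b) / b) ^ γ ≤ ((1 + a) / a) ^ γ := by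
    apply Real.rpow_le_rpow (by positivity) _ hγ
    rw [div_le_div_iff₀ hb ha]; nlinarith
  calc _ = ((1 + a) / a) ^ β * ((1 + b) / b) ^ γ * (1 + a) ^ (-S) * (1 + b) ^ (-S) := by ring
    _ ≤ ((1 + a) / a) ^ β * ((1 + a) / a) ^ γ * (1 + a) ^ (-S) * (1 + b) ^ (-S) := by gcongr
    _ = _ := by ring

theorem sup_nu_integral_lt_top
    (frac : ℝ → ℝ)
    (hfrac : ∀ x : ℝ, frac x ∈ Set.Ioc (-Real.pi) Real.pi ∧
      ∃ k : ℤ, x - frac x = 2 * Real.pi * k)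
    (S β₁ β₂ : ℝ) (hS : 1 < S)
    (h₁ : β₁ ∈ Set.Ico (0:ℝ) 1) (h₂ : β₂ ∈ Set.Ico (0:ℝ) 1)
    (hsum : β₁ + β₂ < 1) :
    (⨆ (ν : ℝ) (_ : 0 ≤ ν), ENNReal.ofReal ν *
      ∫⁻ w : ℝ × ℝ, ENNReal.ofReal
        ((1 + ν * |frac (w.1 + w.2)|) ^ (-(2:ℝ)) *
          (|w.1| ^ (-β₁) * (1 + |w.1|) ^ (β₁ - S)) *
          (|w.2| ^ (-β₂) * (1 + |w.2|) ^ (β₂ - S)))) < ⊤ := by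
  set β := β₁ + β₂ with hβ
  set D := (∫⁻ t : ℝ, ENNReal.ofReal ((1 + |t|) ^ (-(2:ℝ)))) *
      (ENNReal.ofReal ((1 + Real.pi) ^ S) * ∑' n : ℤ, ENNReal.ofReal ((1 + |(n:ℝ)|) ^ (-S))) *
      ∫⁻ t : ℝ, ENNReal.ofReal (|t| ^ (-β) * (1 + |t|) ^ (β - S)) with hD
  have hDfin : D < ⊤ := ENNReal.mul_lt_top (ENNReal.mul_lt_top (kfin 2 (by norm_num))
    (ENNReal.mul_lt_top ENNReal.ofReal_lt_top (ksum S hS)))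
    (hfin S β hS (add_nonneg h₁.1 h₂.1) hsum)
  refine lt_of_le_of_lt (b := D + D) (iSup₂_le fun ν hν0 => ?_) (ENNReal.add_lt_top.2 ⟨hDfin, hDfin⟩)
  rcases hν0.eq_or_lt with rfl | hν
  · simp
  set h : ℝ → ℝ≥0∞ := fun t => ENNReal.ofReal (|t| ^ (-β) * (1 + |t|) ^ (β - S)) with hh
  have hmeas : Measurable h := by fun_prop
  have hA := asym frac hfrac S hS ν hν h hmeas
  set F : ℝ × ℝ → ℝ≥0∞ := fun w => (∑' n : ℤ, ENNReal.ofReal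
        ((1 + ν * |w.1 + w.2 + 2 * Real.pi * n|) ^ (-(2:ℝ)))) *
          (h w.1 * ENNReal.ofReal ((1 + |w.2|) ^ (-S))) with hF
  have hFm : Measurable F := by fun_prop
  have hswap : ∫⁻ w : ℝ × ℝ, F w.swap = ∫⁻ w : ℝ × ℝ, F w := by
    rw [Measure.volume_eq_prod]; exact lintegral_prod_swap F
  have hne : ∀ᵐ w : ℝ × ℝ, w.1 ≠ 0 ∧ w.2 ≠ 0 := by
    have h0 : ∀ᵐ x : ℝ, x ≠ 0 := Measure.ae_ne volume 0
    rw [Measure.volume_eq_prod]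
    exact (Measure.quasiMeasurePreserving_fst.ae h0).and (Measure.quasiMeasurePreserving_snd.ae h0)
  calc _ ≤ ENNReal.ofReal ν * ∫⁻ w : ℝ × ℝ, (F w + F w.swap) := by
        gcongr 1
        apply lintegral_mono_ae
        filter_upwards [hne] with w hw
        obtain ⟨x, y⟩ := w
        simp only [hF, hh, Prod.swap] at hw ⊢
        rw [add_comm y x, ← mul_add, mul_assoc]
        rw [ENNReal.ofReal_mul (by positivity)]
        have hx : 0 < |x| := abs_pos.2 hw.1
        have hy : 0 < |y| := abs_pos.2 hw.2
        apply mul_le_mul'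
        · obtain ⟨-, k, hk⟩ := hfrac (x + y)
          refine le_trans (le_of_eq ?_) (ENNReal.le_tsum (-k))
          have : frac (x + y) = x + y + 2 * Real.pi * ((-k : ℤ) : ℝ) := by
            push_cast; linarith
          rw [this]
        · rw [← ENNReal.ofReal_mul (by positivity), ← ENNReal.ofReal_mul (by positivity)]
          rcases le_total |x| |y| with hxy | hxy
          · refine le_trans (ENNReal.ofReal_le_ofReal ?_) le_self_add
            exact ptw_aux S β₁ β₂ h₁.1 h₂.1 _ _ hx hxy
          · refine le_trans (ENNReal.ofReal_le_ofReal ?_) le_add_self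
            have := ptw_aux S β₂ β₁ h₂.1 h₁.1 _ _ hy hxy
            rw [hβ, add_comm β₁ β₂, mul_comm]
            exact this
    _ = (ENNReal.ofReal ν * ∫⁻ w : ℝ × ℝ, F w) + ENNReal.ofReal ν * ∫⁻ w : ℝ × ℝ, F w := by
        rw [lintegral_add_left hFm, hswap, mul_add]
    _ ≤ D + D := add_le_add hA hA
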